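/- Fix distinct alternatives x, y ∈ X (with X having at least 3 elements). The set Rec = {e : e indexes some computable subset of ℕ} is many-one reducible to S_{x,y}: there is a total computable function g : ℕ → ℕ such that for every e, e ∈ Rec if and only if g(e) ∈ S_{x,y}, where S_{x,y} = {⟨e1,e2,e3⟩ : there exists a REC-measurable profile f such that e1 indexes {v : x f(v) y}, e2 indexes {v : y f(v) x}, and e3 indexes {v : neither x f(v) y nor y f(v) x}}. -/

import Mathlib

/-- A weak order: asymmetric and negatively transitive. -/
def IsWeakPref {X : Type*} (P : X → X → Prop) : Prop :=
  (∀ x y : X, P x y → ¬ P y x) ∧ ∀ x y z : X, ¬ P x y → ¬ P y z → ¬ P x z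

/-- A profile assigns a weak order on the alternatives to each voter in `ℕ`. -/
def IsProf {X : Type*} (f : ℕ → X → X → Prop) : Prop := ∀ v : ℕ, IsWeakPref (f v)

/-- A set of naturals is computable if its membership predicate is computable. -/
def ComputableSet (A : Set ℕ) : Prop := ComputablePred (· ∈ A)

/-- A profile is REC-measurable if each of its preference coalitions is computable. -/
def RECMeasurable {X : Type*} (f : ℕ → X → X → Prop) : Prop :=
  ∀ a b : X, ComputableSet {v : ℕ | f v a b}

/-- The Gödel numbering of partial recursive functions via `Nat.Partrec.Code`. -/
def phi (e : ℕ) : ℕ →. ℕ := (Denumerable.ofNat Nat.Partrec.Code e).eval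

/-- `e` indexes `A` if `φ_e` is the characteristic function of `A`. -/
def Indexes (e : ℕ) (A : Set ℕ) : Prop :=
  ∀ n : ℕ, (n ∈ A → phi e n = Part.some 1) ∧ (n ∉ A → phi e n = Part.some 0)

/-- The set of Gödel codes of characteristic functions of computable sets. -/
def RecSet : Set ℕ := {e : ℕ | ∃ A : Set ℕ, ComputableSet A ∧ Indexes e A}

/-- A set of naturals is r.e. if it is the domain of a partial recursive function. -/
def REset (A : Set ℕ) : Prop :=
  ∃ g : ℕ →. ℕ, Partrec g ∧ ∀ n : ℕ, n ∈ A ↔ (g n).Dom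

/-- The set of codes of REC-measurable profiles restricted to `{x, y}`. -/
def SCodes {X : Type*} (x y : X) : Set ℕ :=
  {n : ℕ | ∃ (e1 e2 e3 : ℕ) (f : ℕ → X → X → Prop),
    n = Nat.pair e1 (Nat.pair e2 e3) ∧ IsProf f ∧ RECMeasurable f ∧
    Indexes e1 {v : ℕ | f v x y} ∧ Indexes e2 {v : ℕ | f v y x} ∧
    Indexes e3 {v : ℕ | ¬ f v x y ∧ ¬ f v y x}}

/-!
The first component of a code in `S_{x,y}` already indexes the computable coalition of voters who
prefer `y` to `x`, so a reduction may send `e` to any triple that starts with `e`, provided the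
triple is realised whenever `e` indexes a computable set `A`. Let the voters in `A` rank `x`
strictly below everything else and let all other voters be indifferent: the three coalitions are
then `A`, `∅` and `Aᶜ`, and an index of `Aᶜ` is computable from `e` by post-composing `φ_e` with
`n ↦ 1 - n`.
-/

theorem exists_phi_eq {h : ℕ →. ℕ} (hh : Partrec h) : ∃ e : ℕ, phi e = h := by
  obtain ⟨c, hc⟩ := Nat.Partrec.Code.exists_code.1 (Partrec.nat_iff.1 hh)
  exact ⟨Encodable.encode c, by rw [phi, Denumerable.ofNat_encode, hc]⟩

theorem exists_computable_phi_eq_bind {h : ℕ →. ℕ} (hh : Partrec h) :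
    ∃ t : ℕ → ℕ, Computable t ∧ ∀ e n, phi (t e) n = (phi e n).bind fun k => h k := by
  obtain ⟨c, rfl⟩ := Nat.Partrec.Code.exists_code.1 (Partrec.nat_iff.1 hh)
  refine ⟨fun e => Encodable.encode (c.comp (Denumerable.ofNat Nat.Partrec.Code e)), ?_, ?_⟩
  · exact (Primrec.encode.comp
      (Nat.Partrec.Code.primrec₂_comp.comp (Primrec.const c) (Primrec.ofNat _))).to_comp
  · intro e n
    rw [phi, Denumerable.ofNat_encode]
    rfl

theorem ComputableSet.exists_indexes {A : Set ℕ} (hA : ComputableSet A) :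
    ∃ e : ℕ, Indexes e A := by
  obtain ⟨χ, hχ, hmem⟩ := ComputablePred.computable_iff.1 hA
  obtain ⟨e, he⟩ := exists_phi_eq
    (Computable.cond hχ (Computable.const 1) (Computable.const 0)).partrec
  have mem_iff (n : ℕ) : n ∈ A ↔ χ n = true := iff_of_eq (congrFun hmem n)
  refine ⟨e, fun n => ⟨fun hn => ?_, fun hn => ?_⟩⟩
  · simp [he, (mem_iff n).1 hn]
  · simp [he, Bool.eq_false_of_not_eq_true (mt (mem_iff n).2 hn)]

theorem exists_computable_indexes_compl :
    ∃ t : ℕ → ℕ, Computable t ∧ ∀ e A, Indexes e A → Indexes (t e) Aᶜ := by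
  have hsub : Computable (fun k : ℕ => 1 - k) :=
    (Primrec.nat_sub.comp (Primrec.const 1) Primrec.id).to_comp
  obtain ⟨t, ht, hphi⟩ := exists_computable_phi_eq_bind hsub.partrec
  refine ⟨t, ht, fun e A he n => ⟨fun hn => ?_, fun hn => ?_⟩⟩
  · simp [hphi, (he n).2 hn]
  · simp [hphi, (he n).1 (not_not.1 hn)]

theorem computableSet_empty : ComputableSet ∅ :=
  ComputablePred.computable_iff.2 ⟨fun _ => false, Computable.const false, by simp⟩

section BottomProfile

variable {X : Type*}

/-- The profile in which every voter in `A` ranks `x` strictly below all other alternatives, which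
are tied, and every voter outside `A` is indifferent between all alternatives. It realises `A` as
the coalition preferring any fixed `y ≠ x` to `x`. -/
def bottomProfile (A : Set ℕ) (x : X) : ℕ → X → X → Prop :=
  fun v a b => v ∈ A ∧ a = x ∧ b ≠ x

theorem isProf_bottomProfile (A : Set ℕ) (x : X) : IsProf (bottomProfile A x) := by
  refine fun v => ⟨fun a b hab hba => hab.2.2 hba.2.1, fun a b c hab hbc hac => ?_⟩
  obtain ⟨hv, ha, hc⟩ := hac
  by_cases hb : b = x
  · exact hbc ⟨hv, hb, hc⟩
  · exact hab ⟨hv, ha, hb⟩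

theorem recMeasurable_bottomProfile {A : Set ℕ} (hA : ComputableSet A) (x : X) :
    RECMeasurable (bottomProfile A x) := by
  intro a b
  by_cases hab : a = x ∧ b ≠ x
  · simpa [bottomProfile, hab] using hA
  · simpa [bottomProfile, hab] using computableSet_empty

theorem pair_mem_sCodes {A : Set ℕ} {x y : X} {e₁ e₂ e₃ : ℕ} (hxy : x ≠ y)
    (hA : ComputableSet A) (h₁ : Indexes e₁ A) (h₂ : Indexes e₂ ∅) (h₃ : Indexes e₃ Aᶜ) :
    Nat.pair e₁ (Nat.pair e₂ e₃) ∈ SCodes x y := by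
  have prefer_y : {v | bottomProfile A x v x y} = A := by
    simp [bottomProfile, hxy.symm]
  have prefer_x : {v | bottomProfile A x v y x} = ∅ := by
    simp [bottomProfile]
  have indifferent : {v | ¬ bottomProfile A x v x y ∧ ¬ bottomProfile A x v y x} = Aᶜ := by
    ext v
    simp [bottomProfile, hxy.symm]
  exact ⟨e₁, e₂, e₃, bottomProfile A x, rfl, isProf_bottomProfile A x,
    recMeasurable_bottomProfile hA x, by rwa [prefer_y], by rwa [prefer_x], by rwa [indifferent]⟩

end BottomProfile

theorem mem_recSet_of_pair_mem_sCodes {X : Type*} {x y : X} {e₁ m : ℕ}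
    (h : Nat.pair e₁ m ∈ SCodes x y) : e₁ ∈ RecSet := by
  obtain ⟨_, _, _, f, hpair, _, hf, h₁, _, _⟩ := h
  obtain ⟨rfl, _⟩ := Nat.pair_eq_pair.1 hpair
  exact ⟨_, hf x y, h₁⟩

theorem recSet_manyone_reducible_sCodes_general {X : Type*} (x y : X) (hxy : x ≠ y) :
    ∃ g : ℕ → ℕ, Computable g ∧ ∀ e : ℕ, e ∈ RecSet ↔ g e ∈ SCodes x y := by
  obtain ⟨z, hz⟩ := computableSet_empty.exists_indexes
  obtain ⟨t, ht, hcompl⟩ := exists_computable_indexes_compl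
  refine ⟨fun e => Nat.pair e (Nat.pair z (t e)), ?_, fun e => ⟨?_, ?_⟩⟩
  · exact Primrec₂.natPair.to_comp.comp Computable.id
      (Primrec₂.natPair.to_comp.comp (Computable.const z) ht)
  · rintro ⟨A, hA, he⟩
    exact pair_mem_sCodes hxy hA he hz (hcompl e A he)
  · exact mem_recSet_of_pair_mem_sCodes

/-- `Rec` is many-one reducible to `S_{x,y}`. -/
theorem recSet_manyone_reducible_sCodes {X : Type*}
    (hX : ∃ a b c : X, a ≠ b ∧ a ≠ c ∧ b ≠ c) (x y : X) (hxy : x ≠ y) :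
    ∃ g : ℕ → ℕ, Computable g ∧ ∀ e : ℕ, e ∈ RecSet ↔ g e ∈ SCodes x y :=
  recSet_manyone_reducible_sCodes_general x y hxy
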